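/- arXiv:math/0303250 — 2 statements merged into one kernel-verified Lean document; each statement's English description precedes it below -/
import Mathlib

section
/- For all complex numbers q and x with |q| < 1 and |x| < 1, one has Σ_{n=0}^∞ Σ_{c=0}^n (x;q)_{n+1} · x^n · q^{c²+c} · x^{2c} · [n choose c]_q = Σ_{n=0}^∞ χ₂₀⁽⁰⁾(n) · q^{(n²−9)/40} · x^{(n−3)/2}, where on the right-hand side only n ≡ 3, 7, 13, 17 (mod 20) contribute, so that all exponents (n²−9)/40 and (n−3)/2 are nonnegative integers, and both series converge absolutely. -/
/-- The finite q-Pochhammer symbol `(x;q)_n = ∏_{i=1}^n (1 - x q^{i-1})`. -/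
noncomputable def qPoch (q x : ℂ) (n : ℕ) : ℂ := ∏ i ∈ Finset.range n, (1 - x * q ^ i)

/-- The Gaussian binomial coefficient `[n choose c]_q`. -/
noncomputable def qBinom (q : ℂ) (n c : ℕ) : ℂ :=
  if c ≤ n then qPoch q q n / (qPoch q q c * qPoch q q (n - c)) else 0

/-- The 20-periodic function `χ₂₀⁽⁰⁾`. -/
def chi20_0 (n : ℕ) : ℤ :=
  if n % 20 = 3 ∨ n % 20 = 17 then 1
  else if n % 20 = 7 ∨ n % 20 = 13 then -1
  else 0

/-!
Write `B_n(z) = ∑_c q^{c²} z^c [n choose c]_q` and `S(a, w, z) = ∑_n (a;q)_n w^n B_n(z)`. The left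
side is `F(x) = (1 - x) S(qx, x, qx²)`. The two `q`-Pascal rules express `B_{n+1}(z)` through
`B_n(z), B_n(qz)` and through `B_n(qz), B_n(q²z)`; summed over `n` they become two functional
equations for `S`. With the relation `(1 - a) S(qa, w, z) = S(a, w, z) - a S(a, qw, z)`, they give
`F(x) = 1 - q x² - q⁴ x⁵ F(qx)`. The right side satisfies the same equation, since `χ₂₀⁽⁰⁾` changes
sign under translation by `10`. The difference `D` of the two sides then satisfies
`D(y) = -q⁴ y⁵ D(qy)`, and as `D` is bounded on the disc of radius `‖x‖ < 1`, iterating this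
contraction forces `D = 0`.
-/

open Finset

theorem eq_zero_of_norm_le_mul_norm_comp {α E : Type*} [NormedAddCommGroup E] {f : α → E}
    {φ : α → α} {s : Set α} {r : ℝ} (hφ : Set.MapsTo φ s s) (hr₀ : 0 ≤ r) (hr₁ : r < 1)
    (hbdd : ∃ K, ∀ y ∈ s, ‖f y‖ ≤ K) (hf : ∀ y ∈ s, ‖f y‖ ≤ r * ‖f (φ y)‖) {x : α} (hx : x ∈ s) :
    f x = 0 := by
  obtain ⟨K, hK⟩ := hbdd
  have iterate_bound (k : ℕ) : ∀ y ∈ s, ‖f y‖ ≤ r ^ k * K := by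
    induction k with
    | zero => simpa using hK
    | succ k ih =>
      intro y hy
      calc ‖f y‖ ≤ r * ‖f (φ y)‖ := hf y hy
        _ ≤ r * (r ^ k * K) := by gcongr; exact ih _ (hφ hy)
        _ = r ^ (k + 1) * K := by ring
  have hlim : Filter.Tendsto (fun k : ℕ => r ^ k * K) Filter.atTop (nhds 0) := by
    simpa using (tendsto_pow_atTop_nhds_zero_of_lt_one hr₀ hr₁).mul_const K
  exact norm_le_zero_iff.1 (ge_of_tendsto' hlim fun k => iterate_bound k x hx)

theorem norm_mul_lt_one {R : Type*} [NonUnitalSeminormedRing R] {a b : R} (ha : ‖a‖ < 1)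
    (hb : ‖b‖ < 1) : ‖a * b‖ < 1 :=
  (norm_mul_le a b).trans_lt (mul_lt_one_of_nonneg_of_lt_one_left (norm_nonneg a) ha hb.le)

theorem not_isOfFinOrder_of_norm_lt_one {R : Type*} [NormedRing R] [NormMulClass R]
    [NormOneClass R] {a : R} (ha : ‖a‖ < 1) : ¬IsOfFinOrder a :=
  fun h => ha.ne h.norm_eq_one

theorem prod_one_add_mul_pow_le_exp {a r : ℝ} (ha : 0 ≤ a) (hr₀ : 0 ≤ r) (hr₁ : r < 1) (n : ℕ) :
    ∏ i ∈ range n, (1 + a * r ^ i) ≤ Real.exp (a / (1 - r)) := by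
  have hgeom : HasSum (fun i => a * r ^ i) (a / (1 - r)) :=
    (hasSum_geometric_of_lt_one hr₀ hr₁).mul_left a
  refine (Real.prod_one_add_le_exp_sum (range n) fun i => by positivity).trans ?_
  exact Real.exp_le_exp.2 (sum_le_hasSum _ (fun i _ => by positivity) hgeom)

section QPochhammer

variable {q : ℂ}

theorem qPoch_zero (q a : ℂ) : qPoch q a 0 = 1 := prod_range_zero _

theorem qPoch_succ (q a : ℂ) (n : ℕ) : qPoch q a (n + 1) = qPoch q a n * (1 - a * q ^ n) :=
  prod_range_succ _ n

theorem qPoch_succ' (q a : ℂ) (n : ℕ) : qPoch q a (n + 1) = (1 - a) * qPoch q (q * a) n := by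
  rw [qPoch, prod_range_succ', pow_zero, mul_one, mul_comm, qPoch]
  exact congrArg _ (prod_congr rfl fun i _ => by ring)

theorem norm_qPoch_le (hq : ‖q‖ < 1) (a : ℂ) (n : ℕ) :
    ‖qPoch q a n‖ ≤ Real.exp (‖a‖ / (1 - ‖q‖)) :=
  calc ‖qPoch q a n‖ = ∏ i ∈ range n, ‖1 - a * q ^ i‖ := norm_prod _ _
    _ ≤ ∏ i ∈ range n, (1 + ‖a‖ * ‖q‖ ^ i) := by
      refine prod_le_prod (fun i _ => norm_nonneg _) fun i _ => ?_
      simpa using norm_sub_le 1 (a * q ^ i)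
    _ ≤ _ := prod_one_add_mul_pow_le_exp (norm_nonneg _) (norm_nonneg _) hq n

theorem one_sub_pow_ne_zero (hq : ¬IsOfFinOrder q) {n : ℕ} (hn : n ≠ 0) : 1 - q ^ n ≠ 0 :=
  fun h => hq (isOfFinOrder_iff_pow_eq_one.2 ⟨n, hn.bot_lt, (sub_eq_zero.1 h).symm⟩)

theorem qPoch_self_succ (q : ℂ) (n : ℕ) : qPoch q q (n + 1) = qPoch q q n * (1 - q ^ (n + 1)) := by
  rw [qPoch_succ, pow_succ']

theorem qPoch_self_ne_zero (hq : ¬IsOfFinOrder q) (n : ℕ) : qPoch q q n ≠ 0 :=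
  prod_ne_zero_iff.2 fun i _ => pow_succ' q i ▸ one_sub_pow_ne_zero hq i.succ_ne_zero

end QPochhammer

section GaussianBinomial

variable {q : ℂ}

theorem qBinom_zero_right (hq : ¬IsOfFinOrder q) (n : ℕ) : qBinom q n 0 = 1 := by
  simp [qBinom, qPoch_zero, qPoch_self_ne_zero hq n]

theorem qBinom_eq_zero_of_lt (q : ℂ) {n c : ℕ} (h : n < c) : qBinom q n c = 0 :=
  if_neg h.not_ge

theorem qBinom_succ_succ_mul (hq : ¬IsOfFinOrder q) (n c : ℕ) :
    qBinom q (n + 1) (c + 1) * (1 - q ^ (c + 1)) = (1 - q ^ (n + 1)) * qBinom q n c := by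
  rcases lt_or_ge n c with h | h
  · simp [qBinom_eq_zero_of_lt, h]
  · have := one_sub_pow_ne_zero hq c.succ_ne_zero
    simp only [qBinom, if_pos h, if_pos (Nat.succ_le_succ h), Nat.add_sub_add_right,
      qPoch_self_succ]
    field_simp

theorem qBinom_succ_right_mul (hq : ¬IsOfFinOrder q) (n c : ℕ) :
    qBinom q n (c + 1) * (1 - q ^ (c + 1)) = (1 - q ^ (n - c)) * qBinom q n c := by
  rcases lt_trichotomy n c with h | rfl | h
  · simp [qBinom_eq_zero_of_lt, h, h.trans c.lt_succ_self]
  · simp [qBinom_eq_zero_of_lt]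
  · obtain ⟨m, rfl⟩ := Nat.exists_eq_add_of_lt h
    have hc := one_sub_pow_ne_zero hq c.succ_ne_zero
    have hm := one_sub_pow_ne_zero hq m.succ_ne_zero
    simp only [qBinom, if_pos h.le, if_pos (Nat.succ_le_of_lt h),
      show c + m + 1 - c = m + 1 by lia, show c + m + 1 - (c + 1) = m by lia, qPoch_self_succ]
    field_simp

theorem pow_sub_mul_pow_succ_mul_qBinom (q : ℂ) (n c : ℕ) :
    q ^ (n - c) * q ^ (c + 1) * qBinom q n c = q ^ (n + 1) * qBinom q n c := by
  rcases lt_or_ge n c with h | h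
  · simp [qBinom_eq_zero_of_lt q h]
  · rw [← pow_add, ← add_assoc, Nat.sub_add_cancel h]

theorem qBinom_succ_succ (hq : ¬IsOfFinOrder q) (n c : ℕ) :
    qBinom q (n + 1) (c + 1) = qBinom q n (c + 1) + q ^ (n - c) * qBinom q n c := by
  refine mul_right_cancel₀ (one_sub_pow_ne_zero hq (Nat.add_one_ne_zero c)) ?_
  linear_combination qBinom_succ_succ_mul hq n c - qBinom_succ_right_mul hq n c
    + pow_sub_mul_pow_succ_mul_qBinom q n c

theorem qBinom_succ_succ' (hq : ¬IsOfFinOrder q) (n c : ℕ) :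
    qBinom q (n + 1) (c + 1) = q ^ (c + 1) * qBinom q n (c + 1) + qBinom q n c := by
  refine mul_right_cancel₀ (one_sub_pow_ne_zero hq (Nat.add_one_ne_zero c)) ?_
  linear_combination qBinom_succ_succ_mul hq n c - q ^ (c + 1) * qBinom_succ_right_mul hq n c
    + pow_sub_mul_pow_succ_mul_qBinom q n c

end GaussianBinomial

section StieltjesWigert

variable {q : ℂ}

/-- The Stieltjes–Wigert polynomial `∑_c q^{c²} z^c [n choose c]_q`, normalised without the usual
factor `1 / (q;q)_n` and with `z` in place of `-z`. -/
noncomputable def stieltjesWigert (q : ℂ) (n : ℕ) (z : ℂ) : ℂ :=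
  ∑ c ∈ range (n + 1), q ^ c ^ 2 * z ^ c * qBinom q n c

theorem stieltjesWigert_zero (hq : ¬IsOfFinOrder q) (z : ℂ) : stieltjesWigert q 0 z = 1 := by
  simp [stieltjesWigert, qBinom_zero_right hq]

theorem stieltjesWigert_eq_sum_add_one (hq : ¬IsOfFinOrder q) (n : ℕ) (z : ℂ) :
    stieltjesWigert q n z =
      ∑ c ∈ range (n + 1), q ^ (c + 1) ^ 2 * z ^ (c + 1) * qBinom q n (c + 1) + 1 := by
  have extend : stieltjesWigert q n z =
      ∑ c ∈ range (n + 2), q ^ c ^ 2 * z ^ c * qBinom q n c := by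
    rw [sum_range_succ, qBinom_eq_zero_of_lt q n.lt_succ_self, mul_zero, add_zero, stieltjesWigert]
  rw [extend, sum_range_succ', qBinom_zero_right hq]
  simp

theorem stieltjesWigert_succ_eq_sum_add_one (hq : ¬IsOfFinOrder q) (n : ℕ) (z : ℂ) :
    stieltjesWigert q (n + 1) z =
      ∑ c ∈ range (n + 1), q ^ (c + 1) ^ 2 * z ^ (c + 1) * qBinom q (n + 1) (c + 1) + 1 := by
  rw [stieltjesWigert, sum_range_succ', qBinom_zero_right hq]
  simp

theorem stieltjesWigert_succ (hq : ¬IsOfFinOrder q) (n : ℕ) (z : ℂ) :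
    stieltjesWigert q (n + 1) z =
      stieltjesWigert q n z + q ^ (n + 1) * z * stieltjesWigert q n (q * z) := by
  rw [stieltjesWigert_succ_eq_sum_add_one hq, stieltjesWigert_eq_sum_add_one hq n z,
    stieltjesWigert, mul_sum, add_right_comm, ← sum_add_distrib]
  refine congrArg (· + 1) (sum_congr rfl fun c _ => ?_)
  linear_combination q ^ (c + 1) ^ 2 * z ^ (c + 1) * qBinom_succ_succ hq n c
    + q ^ (c ^ 2 + c) * z ^ (c + 1) * pow_sub_mul_pow_succ_mul_qBinom q n c

theorem stieltjesWigert_succ' (hq : ¬IsOfFinOrder q) (n : ℕ) (z : ℂ) :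
    stieltjesWigert q (n + 1) z =
      stieltjesWigert q n (q * z) + q * z * stieltjesWigert q n (q ^ 2 * z) := by
  rw [stieltjesWigert_succ_eq_sum_add_one hq, stieltjesWigert_eq_sum_add_one hq n (q * z),
    stieltjesWigert, mul_sum, add_right_comm, ← sum_add_distrib]
  refine congrArg (· + 1) (sum_congr rfl fun c _ => ?_)
  rw [qBinom_succ_succ' hq]
  ring

theorem norm_stieltjesWigert_le_prod (hq : ‖q‖ < 1) (n : ℕ) (z : ℂ) :
    ‖stieltjesWigert q n z‖ ≤ ∏ i ∈ range n, (1 + ‖z‖ * ‖q‖ ^ i) := by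
  have hq' := not_isOfFinOrder_of_norm_lt_one hq
  induction n generalizing z with
  | zero => simp [stieltjesWigert_zero hq']
  | succ n ih =>
    have hqz : ‖q * z‖ ≤ ‖z‖ := by
      simpa using mul_le_of_le_one_left (norm_nonneg z) hq.le
    have hpow : ‖q‖ ^ (n + 1) ≤ ‖q‖ ^ n :=
      pow_le_pow_of_le_one (norm_nonneg _) hq.le n.le_succ
    calc ‖stieltjesWigert q (n + 1) z‖
        ≤ ‖stieltjesWigert q n z‖ + ‖q‖ ^ (n + 1) * ‖z‖ * ‖stieltjesWigert q n (q * z)‖ := by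
          rw [stieltjesWigert_succ hq']
          simpa using norm_add_le (stieltjesWigert q n z)
            (q ^ (n + 1) * z * stieltjesWigert q n (q * z))
      _ ≤ ∏ i ∈ range n, (1 + ‖z‖ * ‖q‖ ^ i) +
            ‖q‖ ^ n * ‖z‖ * ∏ i ∈ range n, (1 + ‖z‖ * ‖q‖ ^ i) := by
          gcongr
          · exact ih z
          · exact (ih (q * z)).trans (by gcongr)
      _ = ∏ i ∈ range (n + 1), (1 + ‖z‖ * ‖q‖ ^ i) := by
          rw [prod_range_succ]
          ring

theorem norm_stieltjesWigert_le (hq : ‖q‖ < 1) (n : ℕ) (z : ℂ) :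
    ‖stieltjesWigert q n z‖ ≤ Real.exp (‖z‖ / (1 - ‖q‖)) :=
  (norm_stieltjesWigert_le_prod hq n z).trans
    (prod_one_add_mul_pow_le_exp (norm_nonneg _) (norm_nonneg _) hq n)

end StieltjesWigert

section StieltjesWigertSeries

/-- The `n`-th term of the generating series `∑_n (a;q)_n w^n B_n(z)` of the Stieltjes–Wigert
polynomials `B_n`. -/
noncomputable def stieltjesWigertTerm (q a w z : ℂ) (n : ℕ) : ℂ :=
  qPoch q a n * w ^ n * stieltjesWigert q n z

/-- The generating series `S(a, w, z) = ∑_n (a;q)_n w^n B_n(z)` of the Stieltjes–Wigert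
polynomials `B_n`, whose functional equations drive the proof. -/
noncomputable def stieltjesWigertSeries (q a w z : ℂ) : ℂ :=
  ∑' n, stieltjesWigertTerm q a w z n

variable {q w : ℂ}

theorem norm_stieltjesWigertTerm_le (hq : ‖q‖ < 1) (a w z : ℂ) (n : ℕ) :
    ‖stieltjesWigertTerm q a w z n‖ ≤
      Real.exp (‖a‖ / (1 - ‖q‖)) * Real.exp (‖z‖ / (1 - ‖q‖)) * ‖w‖ ^ n := by
  rw [stieltjesWigertTerm, norm_mul, norm_mul, norm_pow, mul_right_comm]
  gcongr
  · exact norm_qPoch_le hq a n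
  · exact norm_stieltjesWigert_le hq n z

theorem summable_stieltjesWigertTerm (hq : ‖q‖ < 1) (a : ℂ) (hw : ‖w‖ < 1) (z : ℂ) :
    Summable (stieltjesWigertTerm q a w z) :=
  .of_norm_bounded ((summable_geometric_of_lt_one (norm_nonneg w) hw).mul_left _)
    (norm_stieltjesWigertTerm_le hq a w z)

theorem norm_stieltjesWigertSeries_le (hq : ‖q‖ < 1) (a : ℂ) (hw : ‖w‖ < 1) (z : ℂ) :
    ‖stieltjesWigertSeries q a w z‖ ≤
      Real.exp (‖a‖ / (1 - ‖q‖)) * Real.exp (‖z‖ / (1 - ‖q‖)) * (1 - ‖w‖)⁻¹ :=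
  tsum_of_norm_bounded ((hasSum_geometric_of_lt_one (norm_nonneg w) hw).mul_left _)
    (norm_stieltjesWigertTerm_le hq a w z)

theorem hasSum_stieltjesWigertTerm (hq : ‖q‖ < 1) (a : ℂ) (hw : ‖w‖ < 1) (z : ℂ) :
    HasSum (stieltjesWigertTerm q a w z) (stieltjesWigertSeries q a w z) :=
  (summable_stieltjesWigertTerm hq a hw z).hasSum

theorem one_sub_mul_stieltjesWigertSeries (hq : ‖q‖ < 1) (a : ℂ) (hw : ‖w‖ < 1) (z : ℂ) :
    (1 - a) * stieltjesWigertSeries q (q * a) w z =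
      stieltjesWigertSeries q a w z - a * stieltjesWigertSeries q a (q * w) z := by
  have hterm (n : ℕ) : (1 - a) * stieltjesWigertTerm q (q * a) w z n =
      stieltjesWigertTerm q a w z n - a * stieltjesWigertTerm q a (q * w) z n := by
    simp only [stieltjesWigertTerm]
    linear_combination w ^ n * stieltjesWigert q n z * (qPoch_succ q a n - qPoch_succ' q a n)
  refine ((hasSum_stieltjesWigertTerm hq (q * a) hw z).mul_left (1 - a)).unique ?_
  simpa only [hterm] using (hasSum_stieltjesWigertTerm hq a hw z).sub
    ((hasSum_stieltjesWigertTerm hq a (norm_mul_lt_one hq hw) z).mul_left a)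

theorem stieltjesWigertSeries_eq_one_add (hq : ‖q‖ < 1) (a : ℂ) (hw : ‖w‖ < 1) (z : ℂ) :
    stieltjesWigertSeries q a w z = 1 + w * (1 - a) *
      (stieltjesWigertSeries q (q * a) w z +
        q * z * stieltjesWigertSeries q (q * a) (q * w) (q * z)) := by
  have hq' := not_isOfFinOrder_of_norm_lt_one hq
  have hterm (n : ℕ) : stieltjesWigertTerm q a w z (n + 1) = w * (1 - a) *
      (stieltjesWigertTerm q (q * a) w z n +
        q * z * stieltjesWigertTerm q (q * a) (q * w) (q * z) n) := by
    simp only [stieltjesWigertTerm, qPoch_succ', stieltjesWigert_succ hq']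
    ring
  rw [stieltjesWigertSeries, (summable_stieltjesWigertTerm hq a hw z).tsum_eq_zero_add]
  congr 1
  · simp [stieltjesWigertTerm, qPoch_zero, stieltjesWigert_zero hq']
  · simp only [hterm]
    exact (((hasSum_stieltjesWigertTerm hq _ hw z).add
      ((hasSum_stieltjesWigertTerm hq _ (norm_mul_lt_one hq hw) _).mul_left _)).mul_left _).tsum_eq

theorem stieltjesWigertSeries_eq_one_add' (hq : ‖q‖ < 1) (a : ℂ) (hw : ‖w‖ < 1) (z : ℂ) :
    stieltjesWigertSeries q a w z = 1 + w * (1 - a) *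
      (stieltjesWigertSeries q (q * a) w (q * z) +
        q * z * stieltjesWigertSeries q (q * a) w (q ^ 2 * z)) := by
  have hq' := not_isOfFinOrder_of_norm_lt_one hq
  have hterm (n : ℕ) : stieltjesWigertTerm q a w z (n + 1) = w * (1 - a) *
      (stieltjesWigertTerm q (q * a) w (q * z) n +
        q * z * stieltjesWigertTerm q (q * a) w (q ^ 2 * z) n) := by
    simp only [stieltjesWigertTerm, qPoch_succ', stieltjesWigert_succ' hq']
    ring
  rw [stieltjesWigertSeries, (summable_stieltjesWigertTerm hq a hw z).tsum_eq_zero_add]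
  congr 1
  · simp [stieltjesWigertTerm, qPoch_zero, stieltjesWigert_zero hq']
  · simp only [hterm]
    exact (((hasSum_stieltjesWigertTerm hq _ hw _).add
      ((hasSum_stieltjesWigertTerm hq _ hw _).mul_left _)).mul_left _).tsum_eq

end StieltjesWigertSeries

section DiagonalSeries

/-- The function `F(x) = (1 - x) S(qx, x, qx²) = ∑_n (x;q)_{n+1} x^n B_n(qx²)`, the left side of the
main identity. -/
noncomputable def diagonalSeries (q x : ℂ) : ℂ :=
  (1 - x) * stieltjesWigertSeries q (q * x) x (q * x ^ 2)

variable {q x : ℂ}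

theorem sum_qPoch_mul_qBinom_eq (q x : ℂ) (n : ℕ) :
    ∑ c ∈ range (n + 1),
        qPoch q x (n + 1) * x ^ n * q ^ (c ^ 2 + c) * x ^ (2 * c) * qBinom q n c =
      (1 - x) * stieltjesWigertTerm q (q * x) x (q * x ^ 2) n := by
  rw [stieltjesWigertTerm, stieltjesWigert, mul_sum, mul_sum]
  refine sum_congr rfl fun c _ => ?_
  rw [qPoch_succ']
  ring

theorem diagonalSeries_eq (hq : ‖q‖ < 1) (hx : ‖x‖ < 1) :
    diagonalSeries q x = 1 - q * x ^ 2 - q ^ 4 * x ^ 5 * diagonalSeries q (q * x) := by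
  have hqx := norm_mul_lt_one hq hx
  have hcontig := one_sub_mul_stieltjesWigertSeries hq (q * x) hx (q * x ^ 2)
  have hfirst := stieltjesWigertSeries_eq_one_add hq (q * x) hx (q * x ^ 2)
  have hsecond := stieltjesWigertSeries_eq_one_add' hq (q * x) hqx (q * x ^ 2)
  rw [diagonalSeries, diagonalSeries, show q * (q * x) ^ 2 = q ^ 2 * (q * x ^ 2) by ring]
  linear_combination hfirst + x * hcontig - q * x ^ 2 * hsecond

theorem norm_diagonalSeries_le {r : ℝ} (hq : ‖q‖ < 1) (hr : r < 1) (hx : ‖x‖ ≤ r) :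
    ‖diagonalSeries q x‖ ≤
      2 * (Real.exp (1 / (1 - ‖q‖)) * Real.exp (1 / (1 - ‖q‖)) * (1 - r)⁻¹) := by
  have hx₁ : ‖x‖ < 1 := hx.trans_lt hr
  have hone_sub : ‖1 - x‖ ≤ 2 := by
    have := norm_sub_le 1 x
    rw [norm_one] at this
    linarith
  have hqx2 : ‖q * x ^ 2‖ ≤ 1 := by
    simpa using mul_le_one₀ hq.le (by positivity) (pow_le_one₀ (n := 2) (norm_nonneg x) hx₁.le)
  rw [diagonalSeries, norm_mul]
  gcongr
  refine (norm_stieltjesWigertSeries_le hq (q * x) hx₁ (q * x ^ 2)).trans ?_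
  have := sub_pos.2 hq
  have := sub_pos.2 hr
  have := (norm_mul_lt_one hq hx₁).le
  gcongr

end DiagonalSeries

section PartialTheta

/-- The `n`-th term of the partial theta series on the right side of the main identity. -/
noncomputable def partialThetaTerm (q x : ℂ) (n : ℕ) : ℂ :=
  (chi20_0 n : ℂ) * q ^ ((n ^ 2 - 9) / 40) * x ^ ((n - 3) / 2)

/-- The partial theta series `∑_n χ₂₀⁽⁰⁾(n) q^{(n² - 9)/40} x^{(n - 3)/2}`. -/
noncomputable def partialTheta (q x : ℂ) : ℂ := ∑' n, partialThetaTerm q x n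

variable {q x : ℂ} {r : ℝ}

theorem chi20_0_add_ten (n : ℕ) : chi20_0 (n + 10) = -chi20_0 n := by
  unfold chi20_0
  split_ifs <;> first | rfl | lia

theorem exists_eq_two_mul_add_three_of_chi20_0_ne_zero {n : ℕ} (h : chi20_0 n ≠ 0) :
    ∃ m, n = 2 * m + 3 := by
  refine ⟨(n - 3) / 2, ?_⟩
  unfold chi20_0 at h
  split_ifs at h <;> lia

theorem norm_chi20_0_le_one (n : ℕ) : ‖(chi20_0 n : ℂ)‖ ≤ 1 := by
  unfold chi20_0
  split_ifs <;> simp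

theorem summable_pow_sub_three_half (hr₀ : 0 ≤ r) (hr₁ : r < 1) :
    Summable fun n : ℕ => r ^ ((n - 3) / 2) := by
  refine (summable_nat_add_iff 3).1 (Summable.even_add_odd ?_ ?_) <;>
    simpa [Nat.mul_add_div] using summable_geometric_of_lt_one hr₀ hr₁

theorem norm_partialThetaTerm_le (hq : ‖q‖ < 1) (hx : ‖x‖ ≤ r) (n : ℕ) :
    ‖partialThetaTerm q x n‖ ≤ r ^ ((n - 3) / 2) := by
  have hqpow : ‖q‖ ^ ((n ^ 2 - 9) / 40) ≤ 1 := pow_le_one₀ (norm_nonneg _) hq.le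
  calc ‖partialThetaTerm q x n‖
      = ‖(chi20_0 n : ℂ)‖ * ‖q‖ ^ ((n ^ 2 - 9) / 40) * ‖x‖ ^ ((n - 3) / 2) := by
        simp only [partialThetaTerm, norm_mul, norm_pow]
    _ ≤ 1 * 1 * r ^ ((n - 3) / 2) := by
        gcongr
        exact norm_chi20_0_le_one n
    _ = r ^ ((n - 3) / 2) := by ring

theorem summable_partialThetaTerm (hq : ‖q‖ < 1) (hx : ‖x‖ < 1) :
    Summable (partialThetaTerm q x) :=
  .of_norm_bounded (summable_pow_sub_three_half (norm_nonneg x) hx)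
    (norm_partialThetaTerm_le hq le_rfl)

theorem norm_partialTheta_le (hq : ‖q‖ < 1) (hr : r < 1) (hx : ‖x‖ ≤ r) :
    ‖partialTheta q x‖ ≤ ∑' n : ℕ, r ^ ((n - 3) / 2) :=
  tsum_of_norm_bounded (summable_pow_sub_three_half ((norm_nonneg x).trans hx) hr).hasSum
    (norm_partialThetaTerm_le hq hx)

theorem partialThetaTerm_add_ten (q x : ℂ) (n : ℕ) :
    partialThetaTerm q x (n + 10) = -(q ^ 4 * x ^ 5) * partialThetaTerm q (q * x) n := by
  rcases eq_or_ne (chi20_0 n) 0 with hχ | hχ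
  · simp [partialThetaTerm, chi20_0_add_ten, hχ]
  · obtain ⟨m, rfl⟩ := exists_eq_two_mul_add_three_of_chi20_0_ne_zero hχ
    have hsq : (2 * m + 3 + 10) ^ 2 - 9 = ((2 * m + 3) ^ 2 - 9) + 40 * (m + 4) := by
      ring_nf
      lia
    have hq_exp : ((2 * m + 3 + 10) ^ 2 - 9) / 40 = ((2 * m + 3) ^ 2 - 9) / 40 + (m + 4) := by
      rw [hsq, Nat.add_mul_div_left _ _ (by norm_num)]
    rw [partialThetaTerm, partialThetaTerm, chi20_0_add_ten, hq_exp,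
      show (2 * m + 3 + 10 - 3) / 2 = m + 5 by lia, show (2 * m + 3 - 3) / 2 = m by lia]
    push_cast
    ring

theorem sum_range_ten_partialThetaTerm (q x : ℂ) :
    ∑ n ∈ range 10, partialThetaTerm q x n = 1 - q * x ^ 2 := by
  simp [sum_range_succ, partialThetaTerm, chi20_0, sub_eq_add_neg]

theorem partialTheta_eq (hq : ‖q‖ < 1) (hx : ‖x‖ < 1) :
    partialTheta q x = 1 - q * x ^ 2 - q ^ 4 * x ^ 5 * partialTheta q (q * x) := by
  rw [partialTheta, ← (summable_partialThetaTerm hq hx).sum_add_tsum_nat_add 10,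
    sum_range_ten_partialThetaTerm]
  simp only [partialThetaTerm_add_ten, tsum_mul_left, partialTheta]
  ring

end PartialTheta

theorem norm_diagonalSeries_sub_partialTheta_le {q x : ℂ} (hq : ‖q‖ < 1) (hx : ‖x‖ < 1) :
    ‖diagonalSeries q x - partialTheta q x‖ ≤
      ‖x‖ * ‖diagonalSeries q (q * x) - partialTheta q (q * x)‖ := by
  have hdiff : diagonalSeries q x - partialTheta q x =
      -(q ^ 4 * x ^ 4 * x) * (diagonalSeries q (q * x) - partialTheta q (q * x)) := by
    linear_combination diagonalSeries_eq hq hx - partialTheta_eq hq hx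
  have hfactor : ‖q ^ 4 * x ^ 4 * x‖ ≤ ‖x‖ :=
    calc ‖q ^ 4 * x ^ 4 * x‖ = ‖q‖ ^ 4 * ‖x‖ ^ 4 * ‖x‖ := by simp only [norm_mul, norm_pow]
      _ ≤ 1 * 1 * ‖x‖ := by
        gcongr
        · exact pow_le_one₀ (norm_nonneg _) hq.le
        · exact pow_le_one₀ (norm_nonneg _) hx.le
      _ = ‖x‖ := by ring
  rw [hdiff, norm_mul, norm_neg]
  gcongr

theorem diagonalSeries_eq_partialTheta {q x : ℂ} (hq : ‖q‖ < 1) (hx : ‖x‖ < 1) :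
    diagonalSeries q x = partialTheta q x := by
  let disc : Set ℂ := {y | ‖y‖ ≤ ‖x‖}
  have hmaps : Set.MapsTo (q * ·) disc disc := fun y (hy : ‖y‖ ≤ ‖x‖) =>
    calc ‖q * y‖ = ‖q‖ * ‖y‖ := norm_mul q y
      _ ≤ ‖y‖ := mul_le_of_le_one_left (norm_nonneg y) hq.le
      _ ≤ ‖x‖ := hy
  have hbounded : ∃ K, ∀ y ∈ disc, ‖diagonalSeries q y - partialTheta q y‖ ≤ K :=
    ⟨_, fun y hy => (norm_sub_le _ _).trans
      (add_le_add (norm_diagonalSeries_le hq hx hy) (norm_partialTheta_le hq hx hy))⟩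
  have hcontract (y : ℂ) (hy : ‖y‖ ≤ ‖x‖) :
      ‖diagonalSeries q y - partialTheta q y‖ ≤
        ‖x‖ * ‖diagonalSeries q (q * y) - partialTheta q (q * y)‖ :=
    (norm_diagonalSeries_sub_partialTheta_le hq (hy.trans_lt hx)).trans (by gcongr)
  exact sub_eq_zero.1
    (eq_zero_of_norm_le_mul_norm_comp hmaps (norm_nonneg x) hx hbounded hcontract (le_refl ‖x‖))

theorem stmt_0 (q x : ℂ) (hq : ‖q‖ < 1) (hx : ‖x‖ < 1) :
    Summable (fun n : ℕ => ∑ c ∈ Finset.range (n + 1),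
      qPoch q x (n + 1) * x ^ n * q ^ (c ^ 2 + c) * x ^ (2 * c) * qBinom q n c) ∧
    Summable (fun n : ℕ =>
      (chi20_0 n : ℂ) * q ^ ((n ^ 2 - 9) / 40) * x ^ ((n - 3) / 2)) ∧
    ∑' n : ℕ, ∑ c ∈ Finset.range (n + 1),
        qPoch q x (n + 1) * x ^ n * q ^ (c ^ 2 + c) * x ^ (2 * c) * qBinom q n c
      = ∑' n : ℕ, (chi20_0 n : ℂ) * q ^ ((n ^ 2 - 9) / 40) * x ^ ((n - 3) / 2) := by
  simp only [sum_qPoch_mul_qBinom_eq, tsum_mul_left]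
  exact ⟨(summable_stieltjesWigertTerm hq (q * x) hx (q * x ^ 2)).mul_left (1 - x),
    summable_partialThetaTerm hq hx, diagonalSeries_eq_partialTheta hq hx⟩
end

section
/- Let p be a positive integer and χ : ℤ → ℂ a p-periodic function with mean value zero, i.e. Σ_{n=1}^p χ(n) = 0, and let L(s, χ) denote the entire analytic continuation of the Dirichlet series Σ_{n=1}^∞ χ(n) n^{−s}. Then for every N ∈ ℕ, as t → 0⁺ (t real, positive), Σ_{n=1}^∞ n·χ(n)·e^{−n²t} = Σ_{k=0}^{N−1} L(−2k−1, χ) · (−t)^k / k! + O(t^N). -/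
open scoped Topology

/-!
A zero-mean periodic sequence is the difference of another such sequence. Summing by parts `M`
times therefore replaces `∑ ψ(n) f(n)` by finitely many differences of `f` at the first index plus
`∑ T(n) Δ^M f(n)` with `T` bounded. For `f z = z ^ a * exp (-t z ^ q)`, Cauchy's estimate on a disc
around `x` of radius proportional to `x`, on which `z ^ q` has nonnegative real part, gives
`Δ^M f(x) = O(x ^ (re a - M))` uniformly in `t ≥ 0` and in bounded `a`. The transformed sum is thus
analytic in `a` at `t = 0`, where it is `L(-a)` by the identity theorem, and continuous as `t → 0⁺`.
Differentiating in `t` only changes the sign and replaces `a` by `a + q`, so every derivative at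
`0⁺` is a value of `L`, and Taylor's formula is the asymptotic expansion.
-/

open Asymptotics Filter Finset Metric Set

section ForwardDifference

lemma norm_fwdDiff_iter_le {𝕜 E : Type*} [RCLike 𝕜] [NormedAddCommGroup E] [NormedSpace 𝕜 E]
    {s : Set 𝕜} (hs : Convex ℝ s) {h : 𝕜} (hsh : ∀ z ∈ s, z + h ∈ s) {M : ℕ} {f : 𝕜 → E}
    (hf : ∀ z ∈ s, ContDiffAt 𝕜 M f z) {C : ℝ} (hC : ∀ z ∈ s, ‖iteratedDeriv M f z‖ ≤ C)
    {z : 𝕜} (hz : z ∈ s) : ‖(fwdDiff h)^[M] f z‖ ≤ C * ‖h‖ ^ M := by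
  induction M generalizing f C with
  | zero => simpa using hC z hz
  | succ M ih =>
    have hfM : ∀ w ∈ s, ContDiffAt 𝕜 M f w := fun w hw => (hf w hw).of_le (by simp)
    have hfM_shift : ∀ w ∈ s, ContDiffAt 𝕜 M (fun y => f (y + h)) w := fun w hw =>
      (hfM (w + h) (hsh w hw)).comp w (by fun_prop)
    have hderiv : ∀ w ∈ s, DifferentiableAt 𝕜 (iteratedDeriv M f) w := fun w hw => by
      rw [iteratedDeriv_eq_equiv_comp, LinearIsometryEquiv.comp_differentiableAt_iff]
      exact (hf w hw).differentiableAt_iteratedFDeriv (by exact_mod_cast M.lt_succ_self)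
    have hbound : ∀ w ∈ s, ‖iteratedDeriv M (fwdDiff h f) w‖ ≤ C * ‖h‖ := fun w hw => by
      have hsub : iteratedDeriv M (fwdDiff h f) w =
          iteratedDeriv M f (w + h) - iteratedDeriv M f w :=
        (iteratedDeriv_fun_sub (hfM_shift w hw) (hfM w hw)).trans
          (by rw [iteratedDeriv_comp_add_const])
      rw [hsub]
      simpa using hs.norm_image_sub_le_of_norm_deriv_le hderiv
        (fun y hy => by simpa only [iteratedDeriv_succ] using hC y hy) hw (hsh w hw)
    calc ‖(fwdDiff h)^[M + 1] f z‖ = ‖(fwdDiff h)^[M] (fwdDiff h f) z‖ := by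
          rw [Function.iterate_succ_apply]
      _ ≤ C * ‖h‖ * ‖h‖ ^ M := ih (fun w hw => (hfM_shift w hw).sub (hfM w hw)) hbound
      _ = C * ‖h‖ ^ (M + 1) := by ring

lemma fwdDiff_iter_comp_natCast_add {R G : Type*} [AddCommMonoidWithOne R] [AddCommGroup G]
    (f : R → G) (c : R) (M n : ℕ) :
    (fwdDiff 1)^[M] (fun k : ℕ => f (k + c)) n = (fwdDiff 1)^[M] f (n + c) := by
  simp [fwdDiff_iter_eq_sum_shift, add_right_comm]

lemma summable_fwdDiff_iter {E : Type*} [NormedAddCommGroup E] {f : ℕ → E} (hf : Summable f)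
    (M : ℕ) : Summable ((fwdDiff 1)^[M] f) := by
  induction M with
  | zero => exact hf
  | succ M ih =>
    rw [Function.iterate_succ_apply']
    exact ((summable_nat_add_iff 1).2 ih).sub ih

end ForwardDifference

section Taylor

variable {E : Type*} [NormedAddCommGroup E] [NormedSpace ℝ E]

lemma isBigO_pow_succ_of_hasDerivAt {f f' : ℝ → E} {n : ℕ}
    (hf : ∀ t, 0 < t → HasDerivAt f (f' t) t) (hf₀ : Tendsto f (𝓝[>] 0) (𝓝 0))
    (hf' : f' =O[𝓝[>] 0] fun t => t ^ n) : f =O[𝓝[>] 0] fun t => t ^ (n + 1) := by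
  obtain ⟨C, hC, hbound⟩ := hf'.exists_nonneg
  obtain ⟨δ, hδ, hbound⟩ := mem_nhdsGT_iff_exists_Ioo_subset.1 hbound.bound
  refine .of_bound C ?_
  filter_upwards [Ioo_mem_nhdsGT hδ] with t ht
  have hincr : ∀ᶠ ε in 𝓝[>] (0 : ℝ), ‖f t - f ε‖ ≤ C * t ^ n * t := by
    filter_upwards [Ioo_mem_nhdsGT ht.1] with ε hε
    have hf't : ∀ y ∈ Icc ε t, ‖f' y‖ ≤ C * t ^ n := fun y hy => by
      have hy₀ : 0 < y := hε.1.trans_le hy.1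
      calc ‖f' y‖ ≤ C * ‖y ^ n‖ := hbound ⟨hy₀, hy.2.trans_lt ht.2⟩
        _ = C * y ^ n := by rw [Real.norm_of_nonneg (by positivity)]
        _ ≤ C * t ^ n := by gcongr; exact hy.2
    calc ‖f t - f ε‖ ≤ C * t ^ n * (t - ε) :=
          norm_image_sub_le_of_norm_deriv_le_segment'
            (fun y hy => (hf y (hε.1.trans_le hy.1)).hasDerivWithinAt)
            (fun y hy => hf't y (Ico_subset_Icc_self hy)) t (right_mem_Icc.2 hε.2.le)
      _ ≤ C * t ^ n * t := by
          have := ht.1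
          gcongr
          linarith [hε.1]
  have hlim := le_of_tendsto (hf₀.const_sub (f t)).norm hincr
  rwa [sub_zero, mul_assoc, ← pow_succ, ← Real.norm_of_nonneg (pow_pos ht.1 (n + 1)).le] at hlim

lemma hasDerivAt_sum_pow_div_factorial_smul (l : ℕ → E) (N : ℕ) (t : ℝ) :
    HasDerivAt (fun t : ℝ => ∑ k ∈ range (N + 1), (t ^ k / k.factorial) • l k)
      (∑ k ∈ range N, (t ^ k / k.factorial) • l (k + 1)) t := by
  simp only [sum_range_succ' _ N, pow_zero, Nat.factorial_zero, Nat.cast_one, div_one, one_smul]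
  refine (HasDerivAt.fun_sum fun k _ => ?_).add_const _
  refine (((hasDerivAt_pow (k + 1) t).div_const _).smul_const _).congr_deriv ?_
  rw [Nat.factorial_succ, Nat.cast_mul, Nat.add_sub_cancel,
    mul_div_mul_left _ _ (Nat.cast_ne_zero.2 k.succ_ne_zero)]

lemma isBigO_sub_sum_pow_div_factorial_smul {F : ℕ → ℝ → E} {l : ℕ → E}
    (hF : ∀ k t, 0 < t → HasDerivAt (F k) (F (k + 1) t) t)
    (hl : ∀ k, Tendsto (F k) (𝓝[>] 0) (𝓝 (l k))) (N : ℕ) :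
    (fun t : ℝ => F 0 t - ∑ k ∈ range N, (t ^ k / k.factorial) • l k)
      =O[𝓝[>] 0] fun t => t ^ N := by
  induction N generalizing F l with
  | zero => simpa using (hl 0).isBigO_one ℝ
  | succ N ih =>
    refine isBigO_pow_succ_of_hasDerivAt
      (fun t ht => (hF 0 t ht).sub (hasDerivAt_sum_pow_div_factorial_smul l N t)) ?_
      (ih (fun k => hF (k + 1)) fun k => hl (k + 1))
    have hcont := (hasDerivAt_sum_pow_div_factorial_smul l N 0).continuousAt
    have hlim := (hl 0).sub (hcont.tendsto.mono_left nhdsWithin_le_nhds)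
    rw [sum_range_succ'] at hlim
    simpa using hlim

end Taylor

/-- Sequences of period `p` whose sum over a period vanishes: the coefficients of Dirichlet series
with entire continuation. -/
structure IsZeroMeanPeriodic (p : ℕ) (ψ : ℕ → ℂ) : Prop where
  period_pos : 0 < p
  periodic : Function.Periodic ψ p
  sum_eq_zero : ∑ n ∈ range p, ψ n = 0

namespace IsZeroMeanPeriodic

variable {p : ℕ} {ψ : ℕ → ℂ}

lemma of_int {χ : ℤ → ℂ} (hp : 0 < p) (hper : ∀ n : ℤ, χ (n + p) = χ n)
    (hmean : ∑ n ∈ Finset.Icc 1 p, χ (n : ℤ) = 0) :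
    IsZeroMeanPeriodic p fun n : ℕ => χ ((n : ℤ) + 1) where
  period_pos := hp
  periodic n := by simpa [add_right_comm] using hper ((n : ℤ) + 1)
  sum_eq_zero := by
    rw [← hmean, range_eq_Ico, ← Finset.Ico_add_one_right_eq_Icc]
    simpa using Finset.sum_Ico_add' (fun n : ℕ => χ (n : ℤ)) 0 p 1

lemma exists_norm_le (hψ : IsZeroMeanPeriodic p ψ) : ∃ B, ∀ n, ‖ψ n‖ ≤ B := by
  refine ⟨∑ n ∈ range p, ‖ψ n‖, fun n => ?_⟩
  rw [← hψ.periodic.map_mod_nat n]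
  exact single_le_sum (f := fun k => ‖ψ k‖) (fun _ _ => norm_nonneg _)
    (mem_range.2 (n.mod_lt hψ.period_pos))

lemma neg (hψ : IsZeroMeanPeriodic p ψ) : IsZeroMeanPeriodic p fun n => -ψ n where
  period_pos := hψ.period_pos
  periodic n := by simp only [hψ.periodic n]
  sum_eq_zero := by rw [sum_neg_distrib, hψ.sum_eq_zero, neg_zero]

lemma shift (hψ : IsZeroMeanPeriodic p ψ) : IsZeroMeanPeriodic p fun n => ψ (n + 1) where
  period_pos := hψ.period_pos
  periodic n := by simpa only [add_right_comm] using hψ.periodic (n + 1)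
  sum_eq_zero := by
    have hsum : ∑ n ∈ range p, ψ (n + 1) + ψ 0 = ∑ n ∈ range p, ψ n + ψ p := by
      rw [← sum_range_succ, ← sum_range_succ']
    simpa [hψ.sum_eq_zero, hψ.periodic.eq] using hsum

lemma exists_fwdDiff_eq (hψ : IsZeroMeanPeriodic p ψ) :
    ∃ S, IsZeroMeanPeriodic p S ∧ fwdDiff 1 S = ψ := by
  let P : ℕ → ℂ := fun n => ∑ i ∈ range n, ψ i
  have hP : Function.Periodic P p := fun n => by
    induction n with
    | zero => simpa [P] using hψ.sum_eq_zero
    | succ n ih => simp only [P, add_right_comm, sum_range_succ] at ih ⊢; rw [ih, hψ.periodic n]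
  have hp : (p : ℂ) ≠ 0 := Nat.cast_ne_zero.2 hψ.period_pos.ne'
  refine ⟨fun n => P n - (∑ k ∈ range p, P k) / p,
    ⟨hψ.period_pos, fun n => by simp only [hP n], ?_⟩, ?_⟩
  · rw [sum_sub_distrib, sum_const, card_range, nsmul_eq_mul, mul_div_cancel₀ _ hp, sub_self]
  · ext n
    simp [fwdDiff, P, sum_range_succ]

end IsZeroMeanPeriodic

section SummationByParts

lemma summable_mul_of_norm_le {ψ f : ℕ → ℂ} {B : ℝ} (hψ : ∀ n, ‖ψ n‖ ≤ B) (hf : Summable f) :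
    Summable fun n => ψ n * f n :=
  .of_norm_bounded (hf.norm.mul_left B) fun n => by
    rw [norm_mul]
    gcongr
    exact hψ n

lemma tsum_fwdDiff_mul {S f : ℕ → ℂ} {B : ℝ} (hS : ∀ n, ‖S n‖ ≤ B) (hf : Summable f) :
    ∑' n, fwdDiff 1 S n * f n = -(S 0 * f 0) - ∑' n, S (n + 1) * fwdDiff 1 f n := by
  have hSf := summable_mul_of_norm_le hS hf
  have hSf_shift := (summable_nat_add_iff 1).2 hSf
  have hSf_succ := summable_mul_of_norm_le (fun n => hS (n + 1)) hf
  simp only [fwdDiff, sub_mul, mul_sub]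
  rw [hSf_succ.tsum_sub hSf, hSf_shift.tsum_sub hSf_succ, hSf.tsum_eq_zero_add]
  ring

lemma IsZeroMeanPeriodic.exists_tsum_mul_eq_sum_add_tsum_mul_fwdDiff_iter {p : ℕ} {ψ : ℕ → ℂ}
    (hψ : IsZeroMeanPeriodic p ψ) (M : ℕ) :
    ∃ c T : ℕ → ℂ, IsZeroMeanPeriodic p T ∧ ∀ f : ℕ → ℂ, Summable f →
      ∑' n, ψ n * f n =
        ∑ j ∈ range M, c j * (fwdDiff 1)^[j] f 0 + ∑' n, T n * (fwdDiff 1)^[M] f n := by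
  induction M with
  | zero => exact ⟨0, ψ, hψ, fun f _ => by simp⟩
  | succ M ih =>
    obtain ⟨c, T, hT, hparts⟩ := ih
    obtain ⟨S, hS, rfl⟩ := hT.exists_fwdDiff_eq
    obtain ⟨B, hB⟩ := hS.exists_norm_le
    refine ⟨Function.update c M (-S 0), fun n => -S (n + 1), hS.shift.neg, fun f hf => ?_⟩
    have hc : ∑ j ∈ range M, Function.update c M (-S 0) j * (fwdDiff 1)^[j] f 0 =
        ∑ j ∈ range M, c j * (fwdDiff 1)^[j] f 0 :=
      sum_congr rfl fun j hj => by rw [Function.update_of_ne (mem_range.1 hj).ne]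
    rw [hparts f hf, tsum_fwdDiff_mul hB (summable_fwdDiff_iter hf M), sum_range_succ, hc,
      Function.update_self, Function.iterate_succ_apply']
    simp only [neg_mul, tsum_neg]
    ring

end SummationByParts

/-- The function `z ^ a * exp (-t z ^ q)`: the regularised summand of the Dirichlet series
at `s = -a`. -/
noncomputable def dampedCpow (q : ℕ) (a : ℂ) (t : ℝ) (z : ℂ) : ℂ :=
  z ^ a * Complex.exp (-(t * z ^ q))

section DampedCpow

lemma dampedCpow_zero (q : ℕ) (a z : ℂ) : dampedCpow q a 0 z = z ^ a := by simp [dampedCpow]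

lemma norm_dampedCpow_ofReal (q : ℕ) (a : ℂ) (t : ℝ) {x : ℝ} (hx : 0 < x) :
    ‖dampedCpow q a t x‖ = x ^ a.re * Real.exp (-(t * x ^ q)) := by
  rw [dampedCpow, norm_mul, Complex.norm_cpow_eq_rpow_re_of_pos hx, Complex.norm_exp]
  norm_cast

lemma differentiableAt_dampedCpow {q : ℕ} {a : ℂ} {t : ℝ} {z : ℂ} (hz : z ∈ Complex.slitPlane) :
    DifferentiableAt ℂ (dampedCpow q a t) z :=
  (differentiableAt_id.cpow_const hz).mul (by fun_prop)

lemma differentiable_dampedCpow_exponent (q : ℕ) (t : ℝ) {z : ℂ} (hz : z ≠ 0) :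
    Differentiable ℂ fun a => dampedCpow q a t z := fun _ =>
  (differentiableAt_id.const_cpow (.inl hz)).mul_const _

lemma continuous_dampedCpow_time (q : ℕ) (a z : ℂ) : Continuous fun t => dampedCpow q a t z := by
  unfold dampedCpow
  fun_prop

lemma hasDerivAt_dampedCpow_time (q : ℕ) (a : ℂ) (t : ℝ) {z : ℂ} (hz : z ≠ 0) :
    HasDerivAt (fun t => dampedCpow q a t z) (-dampedCpow q (a + q) t z) t := by
  have hexp : HasDerivAt (fun u : ℂ => Complex.exp (-(u * z ^ q)))
      (Complex.exp (-(t * z ^ q)) * -(1 * z ^ q)) t :=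
    ((hasDerivAt_id (t : ℂ)).mul_const (z ^ q)).neg.cexp
  refine (hexp.comp_ofReal.const_mul (z ^ a)).congr_deriv ?_
  rw [dampedCpow, Complex.cpow_add _ _ hz, Complex.cpow_natCast]
  ring

lemma exists_closedBall_one_re_pos_and_re_pow_nonneg (q : ℕ) :
    ∃ δ > 0, ∀ w ∈ closedBall (1 : ℂ) δ, 0 < w.re ∧ 0 ≤ (w ^ q).re := by
  have hopen : IsOpen {w : ℂ | 0 < w.re ∧ 0 < (w ^ q).re} :=
    (isOpen_lt continuous_const Complex.continuous_re).inter
      (isOpen_lt continuous_const (Complex.continuous_re.comp (continuous_pow q)))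
  have hmem : {w : ℂ | 0 < w.re ∧ 0 < (w ^ q).re} ∈ 𝓝 1 := hopen.mem_nhds (by simp)
  obtain ⟨δ, hδ, hball⟩ := nhds_basis_closedBall.mem_iff.1 hmem
  exact ⟨δ, hδ, fun w hw => ⟨(hball hw).1, (hball hw).2.le⟩⟩

lemma norm_ofReal_mul_cpow {x : ℝ} (hx : 0 < x) {w : ℂ} (hw : w ≠ 0) (a : ℂ) :
    ‖((x : ℂ) * w) ^ a‖ = x ^ a.re * ‖w ^ a‖ := by
  have hx' : (x : ℂ) ≠ 0 := Complex.ofReal_ne_zero.2 hx.ne'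
  rw [Complex.norm_cpow_of_ne_zero (mul_ne_zero hx' hw), Complex.norm_cpow_of_ne_zero hw,
    Complex.arg_real_mul w hx, norm_mul, Complex.norm_of_nonneg hx.le,
    Real.mul_rpow hx.le (norm_nonneg w), mul_div_assoc]

lemma exists_norm_dampedCpow_mul_le (q : ℕ) (R : ℝ) :
    ∃ δ > 0, ∃ C, ∀ w ∈ closedBall (1 : ℂ) δ, 0 < w.re ∧ ∀ a : ℂ, ‖a‖ ≤ R → ∀ t : ℝ, 0 ≤ t →
      ∀ x : ℝ, 0 < x → ‖dampedCpow q a t (x * w)‖ ≤ C * x ^ a.re := by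
  obtain ⟨δ, hδ, hre⟩ := exists_closedBall_one_re_pos_and_re_pow_nonneg q
  have hcont : ContinuousOn (fun y : ℂ × ℂ => y.1 ^ y.2) (closedBall 1 δ ×ˢ closedBall 0 R) :=
    fun y hy => (continuousAt_cpow (.inl (hre y.1 hy.1).1)).continuousWithinAt
  obtain ⟨C, hC⟩ := ((isCompact_closedBall _ _).prod
    (isCompact_closedBall _ _)).exists_bound_of_continuousOn hcont
  refine ⟨δ, hδ, C, fun w hw => ⟨(hre w hw).1, fun a ha t ht x hx => ?_⟩⟩
  have hw₀ : w ≠ 0 := fun h => by simpa [h] using (hre w hw).1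
  have hexp : ‖Complex.exp (-(t * (x * w) ^ q))‖ ≤ 1 := by
    have hre_eq : ((t : ℂ) * (x * w) ^ q).re = t * x ^ q * (w ^ q).re := by
      rw [mul_pow, ← mul_assoc, ← Complex.ofReal_pow, ← Complex.ofReal_mul, Complex.re_ofReal_mul]
    rw [Complex.norm_exp, Real.exp_le_one_iff, Complex.neg_re, hre_eq, neg_nonpos]
    exact mul_nonneg (by positivity) (hre w hw).2
  have hcpow : ‖w ^ a‖ ≤ C := hC (w, a) ⟨hw, by simpa using ha⟩
  calc ‖dampedCpow q a t (x * w)‖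
      = x ^ a.re * ‖w ^ a‖ * ‖Complex.exp (-(t * (x * w) ^ q))‖ := by
        rw [dampedCpow, norm_mul, norm_ofReal_mul_cpow hx hw₀]
    _ ≤ x ^ a.re * C * 1 := by
        have hC₀ : 0 ≤ C := (norm_nonneg _).trans hcpow
        gcongr
    _ = C * x ^ a.re := by ring

lemma exists_norm_iteratedDeriv_dampedCpow_le (q M : ℕ) (R : ℝ) :
    ∃ C, ∀ a : ℂ, ‖a‖ ≤ R → ∀ t : ℝ, 0 ≤ t → ∀ x : ℝ, 0 < x →
      ‖iteratedDeriv M (dampedCpow q a t) x‖ ≤ C * x ^ (a.re - M) := by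
  obtain ⟨δ, hδ, C, hC⟩ := exists_norm_dampedCpow_mul_le q R
  refine ⟨M.factorial * C / δ ^ M, fun a ha t ht x hx => ?_⟩
  have hx' : (x : ℂ) ≠ 0 := Complex.ofReal_ne_zero.2 hx.ne'
  have hscale : ∀ z ∈ closedBall (x : ℂ) (x * δ), ∃ w ∈ closedBall (1 : ℂ) δ, z = x * w := by
    intro z hz
    refine ⟨z / x, ?_, by field_simp⟩
    rw [mem_closedBall_iff_norm, div_sub_one hx', norm_div, Complex.norm_of_nonneg hx.le,
      div_le_iff₀' hx]
    exact mem_closedBall_iff_norm.1 hz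
  have hdiff : DifferentiableOn ℂ (dampedCpow q a t) (closedBall x (x * δ)) := fun z hz => by
    obtain ⟨w, hw, rfl⟩ := hscale z hz
    refine (differentiableAt_dampedCpow (.inl ?_)).differentiableWithinAt
    simpa [Complex.re_ofReal_mul] using mul_pos hx (hC w hw).1
  calc ‖iteratedDeriv M (dampedCpow q a t) x‖
      ≤ M.factorial * (C * x ^ a.re) / (x * δ) ^ M :=
        Complex.norm_iteratedDeriv_le_of_forall_mem_sphere_norm_le M (by positivity)
          (hdiff.diffContOnCl_ball Subset.rfl) fun z hz => by
            obtain ⟨w, hw, rfl⟩ := hscale z (sphere_subset_closedBall hz)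
            exact (hC w hw).2 a ha t ht x hx
    _ = M.factorial * C / δ ^ M * x ^ (a.re - M) := by
        rw [Real.rpow_sub hx, Real.rpow_natCast, mul_pow]
        field_simp

lemma exists_norm_fwdDiff_iter_dampedCpow_le (q M : ℕ) (R : ℝ) :
    ∃ C, ∀ a : ℂ, ‖a‖ ≤ R → a.re ≤ M → ∀ t : ℝ, 0 ≤ t → ∀ x : ℝ, 0 < x →
      ‖(fwdDiff 1)^[M] (dampedCpow q a t) x‖ ≤ C * x ^ (a.re - M) := by
  obtain ⟨C, hC⟩ := exists_norm_iteratedDeriv_dampedCpow_le q M R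
  refine ⟨C, fun a ha haM t ht x hx => ?_⟩
  let s : Set ℂ := Complex.ofReal '' Ici x
  have hs : Convex ℝ s := (convex_Ici x).linear_image Complex.ofRealCLM.toLinearMap
  have hs_add : ∀ z ∈ s, z + 1 ∈ s := by
    rintro _ ⟨y, hy, rfl⟩
    exact ⟨y + 1, (mem_Ici.1 hy).trans (by simp), by simp⟩
  have hcontDiff : ∀ z ∈ s, ContDiffAt ℂ M (dampedCpow q a t) z := by
    rintro _ ⟨y, hy, rfl⟩
    refine (DifferentiableOn.analyticAt (s := Complex.slitPlane)
      (fun z hz => (differentiableAt_dampedCpow hz).differentiableWithinAt)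
      (Complex.isOpen_slitPlane.mem_nhds ?_)).contDiffAt
    exact Complex.ofReal_mem_slitPlane.2 (hx.trans_le hy)
  have hC₀ : 0 ≤ C := nonneg_of_mul_nonneg_left
    ((norm_nonneg _).trans (hC a ha t ht x hx)) (Real.rpow_pos_of_pos hx _)
  have hderiv : ∀ z ∈ s, ‖iteratedDeriv M (dampedCpow q a t) z‖ ≤ C * x ^ (a.re - M) := by
    rintro _ ⟨y, hy, rfl⟩
    refine (hC a ha t ht y (hx.trans_le hy)).trans ?_
    gcongr ?_ * ?_
    exact Real.rpow_le_rpow_of_nonpos hx hy (sub_nonpos.2 haM)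
  simpa using norm_fwdDiff_iter_le hs hs_add hcontDiff hderiv (mem_image_of_mem _ self_mem_Ici)

end DampedCpow

section DampedSeries

variable {q : ℕ}

lemma norm_dampedCpow_natCast_add_one (q : ℕ) (a : ℂ) (t : ℝ) (n : ℕ) :
    ‖dampedCpow q a t (n + 1)‖ = ((n : ℝ) + 1) ^ a.re * Real.exp (-(t * ((n : ℝ) + 1) ^ q)) := by
  rw [← norm_dampedCpow_ofReal q a t n.cast_add_one_pos]
  push_cast
  rfl

lemma norm_dampedCpow_natCast_add_one_anti (q : ℕ) (a : ℂ) (n : ℕ) :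
    Antitone fun t => ‖dampedCpow q a t (n + 1)‖ := fun t u htu => by
  simp only [norm_dampedCpow_natCast_add_one]
  gcongr

lemma summable_dampedCpow (hq : q ≠ 0) (a : ℂ) {t : ℝ} (ht : 0 < t) :
    Summable fun n : ℕ => dampedCpow q a t (n + 1) := by
  obtain ⟨k, hk⟩ := exists_nat_ge a.re
  refine .of_norm_bounded
    ((summable_nat_add_iff 1).2 (Real.summable_pow_mul_exp_neg_nat_mul k ht)) fun n => ?_
  have hn : (1 : ℝ) ≤ n + 1 := by simp
  have hcpow : ((n : ℝ) + 1) ^ a.re ≤ ((n : ℝ) + 1) ^ k := by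
    rw [← Real.rpow_natCast]
    exact Real.rpow_le_rpow_of_exponent_le hn hk
  have hexp : -(t * ((n : ℝ) + 1) ^ q) ≤ -t * ((n : ℝ) + 1) := by
    rw [neg_mul, neg_le_neg_iff]
    gcongr
    exact le_self_pow₀ hn hq
  rw [norm_dampedCpow_natCast_add_one, Nat.cast_add_one]
  gcongr

lemma summable_dampedCpow_zero (q : ℕ) {a : ℂ} (ha : a.re < -1) :
    Summable fun n : ℕ => dampedCpow q a 0 (n + 1) := by
  refine .of_norm_bounded ((summable_nat_add_iff 1).2 (Real.summable_nat_rpow.2 ha)) fun n => ?_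
  simp [norm_dampedCpow_natCast_add_one]

lemma differentiable_fwdDiff_iter_dampedCpow (q j : ℕ) (t : ℝ) (n : ℕ) :
    Differentiable ℂ fun a => (fwdDiff 1)^[j] (dampedCpow q a t) (n + 1) := by
  simp only [fwdDiff_iter_eq_sum_shift]
  refine .fun_sum fun k _ => (differentiable_dampedCpow_exponent q t ?_).const_smul _
  rw [nsmul_one]
  norm_cast
  lia

lemma continuous_fwdDiff_iter_dampedCpow (q j : ℕ) (a z : ℂ) :
    Continuous fun t => (fwdDiff 1)^[j] (dampedCpow q a t) z := by
  simp only [fwdDiff_iter_eq_sum_shift]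
  exact continuous_finsetSum _ fun k _ => (continuous_dampedCpow_time q a _).const_smul _

lemma exists_norm_fwdDiff_iter_dampedCpow_le_rpow_neg_two (q : ℕ) {M : ℕ} {R : ℝ}
    (hM : R + 2 ≤ M) :
    ∃ C, ∀ a : ℂ, ‖a‖ ≤ R → ∀ t : ℝ, 0 ≤ t → ∀ n : ℕ,
      ‖(fwdDiff 1)^[M] (dampedCpow q a t) (n + 1)‖ ≤ C * ((n : ℝ) + 1) ^ (-2 : ℝ) := by
  obtain ⟨C, hC⟩ := exists_norm_fwdDiff_iter_dampedCpow_le q M R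
  refine ⟨C, fun a ha t ht n => ?_⟩
  have hre : a.re - M ≤ -2 := by linarith [Complex.re_le_norm a]
  have hbound := hC a ha (by linarith) t ht (n + 1) n.cast_add_one_pos
  have hC₀ : 0 ≤ C := nonneg_of_mul_nonneg_left
    ((norm_nonneg _).trans hbound) (Real.rpow_pos_of_pos n.cast_add_one_pos _)
  push_cast at hbound
  refine hbound.trans ?_
  gcongr
  simp

lemma summable_natCast_add_one_rpow_neg_two :
    Summable fun n : ℕ => ((n : ℝ) + 1) ^ (-2 : ℝ) := by
  simpa using (summable_nat_add_iff 1).2 (Real.summable_nat_rpow (p := -2).2 (by norm_num))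

/-- The regularisation `∑ ψ(n) n ^ a exp (-t n ^ q)` of the Dirichlet series of `ψ` at `s = -a`.
The index is shifted: the term of index `n` belongs to the integer `n + 1`. -/
noncomputable def dampedSeries (ψ : ℕ → ℂ) (q : ℕ) (a : ℂ) (t : ℝ) : ℂ :=
  ∑' n : ℕ, ψ n * dampedCpow q a t (n + 1)

lemma hasDerivAt_dampedSeries {ψ : ℕ → ℂ} {B : ℝ} (hψ : ∀ n, ‖ψ n‖ ≤ B) (hq : q ≠ 0) (a : ℂ)
    {t : ℝ} (ht : 0 < t) :
    HasDerivAt (dampedSeries ψ q a) (-dampedSeries ψ q (a + q) t) t := by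
  have hmem : t ∈ Ioi (t / 2) := half_lt_self ht
  have hderiv (n : ℕ) (u : ℝ) : HasDerivAt (fun u => ψ n * dampedCpow q a u (n + 1))
      (ψ n * -dampedCpow q (a + q) u (n + 1)) u :=
    (hasDerivAt_dampedCpow_time q a u n.cast_add_one_ne_zero).const_mul _
  have hbound (n : ℕ) (u : ℝ) (hu : u ∈ Ioi (t / 2)) :
      ‖ψ n * -dampedCpow q (a + q) u (n + 1)‖ ≤
        B * ‖dampedCpow q (a + q) (t / 2) (n + 1)‖ := by
    rw [norm_mul, norm_neg]
    gcongr
    · exact (norm_nonneg _).trans (hψ n)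
    · exact hψ n
    · exact norm_dampedCpow_natCast_add_one_anti q _ n (mem_Ioi.1 hu).le
  refine (hasDerivAt_tsum_of_isPreconnected
    ((summable_dampedCpow hq (a + q) (half_pos ht)).norm.mul_left B) isOpen_Ioi isPreconnected_Ioi
    (fun n u _ => hderiv n u) hbound hmem
    (summable_mul_of_norm_le hψ (summable_dampedCpow hq a ht)) hmem).congr_deriv ?_
  simp only [mul_neg, tsum_neg, dampedSeries]

lemma IsZeroMeanPeriodic.exists_regularization {p : ℕ} {ψ : ℕ → ℂ} (hψ : IsZeroMeanPeriodic p ψ)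
    (q : ℕ) (R : ℝ) :
    ∃ G : ℂ → ℝ → ℂ, DifferentiableOn ℂ (fun a => G a 0) (ball 0 R) ∧
      (∀ a ∈ ball 0 R, ContinuousWithinAt (G a) (Ici 0) 0) ∧
      ∀ a t, (Summable fun n : ℕ => dampedCpow q a t (n + 1)) → dampedSeries ψ q a t = G a t := by
  obtain ⟨M, hM⟩ := exists_nat_ge (R + 2)
  obtain ⟨c, T, hT, hparts⟩ := hψ.exists_tsum_mul_eq_sum_add_tsum_mul_fwdDiff_iter M
  obtain ⟨B, hB⟩ := hT.exists_norm_le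
  obtain ⟨C, hC⟩ := exists_norm_fwdDiff_iter_dampedCpow_le_rpow_neg_two q hM
  have hsummable := (summable_natCast_add_one_rpow_neg_two.mul_left C).mul_left B
  have hbound : ∀ a ∈ ball (0 : ℂ) R, ∀ t, 0 ≤ t → ∀ n,
      ‖T n * (fwdDiff 1)^[M] (dampedCpow q a t) (n + 1)‖ ≤ B * (C * ((n : ℝ) + 1) ^ (-2 : ℝ)) := by
    intro a ha t ht n
    rw [norm_mul]
    exact mul_le_mul (hB n) (hC a (mem_ball_zero_iff.1 ha).le t ht n) (norm_nonneg _)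
      ((norm_nonneg _).trans (hB n))
  refine ⟨fun a t => ∑ j ∈ range M, c j * (fwdDiff 1)^[j] (dampedCpow q a t) ((0 : ℕ) + 1) +
    ∑' n : ℕ, T n * (fwdDiff 1)^[M] (dampedCpow q a t) (n + 1), .add ?_ ?_,
    fun a ha => .add ?_ ?_, fun a t hf => ?_⟩
  · exact (Differentiable.fun_sum fun j _ =>
      (differentiable_fwdDiff_iter_dampedCpow q j 0 0).const_mul _).differentiableOn
  · exact Complex.differentiableOn_tsum_of_summable_norm hsummable
      (fun n => ((differentiable_fwdDiff_iter_dampedCpow q M 0 n).const_mul _).differentiableOn)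
      isOpen_ball fun n a ha => hbound a ha 0 le_rfl n
  · exact (continuous_finsetSum _ fun j _ =>
      (continuous_fwdDiff_iter_dampedCpow q j a _).const_mul _).continuousWithinAt
  · exact tendsto_tsum_of_dominated_convergence hsummable
      (fun n => ((continuous_fwdDiff_iter_dampedCpow q M a _).const_mul _).continuousWithinAt)
      (eventually_mem_nhdsWithin.mono fun t ht => hbound a ha t ht)
  · simp only [dampedSeries, hparts _ hf,
      fwdDiff_iter_comp_natCast_add (dampedCpow q a t) 1]

lemma IsZeroMeanPeriodic.tendsto_dampedSeries {p : ℕ} {ψ : ℕ → ℂ} (hψ : IsZeroMeanPeriodic p ψ)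
    {L : ℂ → ℂ} (hL : Differentiable ℂ L)
    (hLseries : ∀ s : ℂ, 1 < s.re → HasSum (fun n : ℕ => ψ n / ((n : ℂ) + 1) ^ s) (L s))
    (a : ℂ) (hq : q ≠ 0) :
    Tendsto (dampedSeries ψ q a) (𝓝[>] 0) (𝓝 (L (-a))) := by
  obtain ⟨G, hdiff, hcont, hG⟩ := hψ.exists_regularization q (‖a‖ + 3)
  have ha : a ∈ ball (0 : ℂ) (‖a‖ + 3) := by simp
  have htwo : (-2 : ℂ) ∈ ball (0 : ℂ) (‖a‖ + 3) := by
    rw [mem_ball_zero_iff, norm_neg, Complex.norm_ofNat]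
    linarith [norm_nonneg a]
  have hseries : ∀ b : ℂ, b.re < -1 → G b 0 = L (-b) := fun b hb => by
    rw [← hG b 0 (summable_dampedCpow_zero q hb),
      ← (hLseries (-b) (by simpa using lt_neg_of_lt_neg hb)).tsum_eq]
    simp only [dampedSeries, dampedCpow_zero, Complex.cpow_neg, div_inv_eq_mul]
  have hhalfPlane : ∀ᶠ b : ℂ in 𝓝 (-2), G b 0 = L (-b) := by
    filter_upwards [(isOpen_lt Complex.continuous_re continuous_const).mem_nhds
      (show (-2 : ℂ).re < -1 by norm_num)] with b hb using hseries b hb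
  have hGL : G a 0 = L (-a) :=
    (hdiff.analyticOnNhd isOpen_ball).eqOn_of_preconnected_of_eventuallyEq
      ((hL.comp differentiable_neg).differentiableOn.analyticOnNhd isOpen_ball)
      (convex_ball 0 _).isPreconnected htwo hhalfPlane ha
  rw [← hGL]
  refine ((hcont a ha).mono Ioi_subset_Ici_self).tendsto.congr' ?_
  filter_upwards [self_mem_nhdsWithin] with t ht
  exact (hG a t (summable_dampedCpow hq a ht)).symm

end DampedSeries

theorem stmt_5_general {p : ℕ} {ψ : ℕ → ℂ} (hψ : IsZeroMeanPeriodic p ψ)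
    {L : ℂ → ℂ} (hL : Differentiable ℂ L)
    (hLseries : ∀ s : ℂ, 1 < s.re → HasSum (fun n : ℕ => ψ n / ((n : ℂ) + 1) ^ s) (L s))
    (a : ℂ) {q : ℕ} (hq : q ≠ 0) (N : ℕ) :
    (fun t : ℝ => dampedSeries ψ q a t
        - ∑ k ∈ range N, L (-(a + q * k)) * (-(t : ℂ)) ^ k / (k.factorial : ℂ))
      =O[𝓝[>] 0] fun t : ℝ => t ^ N := by
  obtain ⟨B, hB⟩ := hψ.exists_norm_le
  let F (k : ℕ) (t : ℝ) : ℂ := (-1) ^ k * dampedSeries ψ q (a + q * k) t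
  have hF (k : ℕ) (t : ℝ) (ht : 0 < t) : HasDerivAt (F k) (F (k + 1) t) t := by
    refine ((hasDerivAt_dampedSeries hB hq (a + q * k) ht).const_mul _).congr_deriv ?_
    simp only [F, Nat.cast_add_one, mul_add_one, add_assoc, pow_succ]
    ring
  have hlim (k : ℕ) : Tendsto (F k) (𝓝[>] 0) (𝓝 ((-1) ^ k * L (-(a + q * k)))) :=
    (hψ.tendsto_dampedSeries hL hLseries (a + q * k) hq).const_mul _
  refine (isBigO_sub_sum_pow_div_factorial_smul hF hlim N).congr_left fun t => ?_
  congr 1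
  · simp [F]
  · refine sum_congr rfl fun k _ => ?_
    rw [Complex.real_smul, neg_pow]
    push_cast
    ring

theorem stmt_5 (p : ℕ) (hp : 0 < p) (χ : ℤ → ℂ)
    (hper : ∀ n : ℤ, χ (n + p) = χ n)
    (hmean : ∑ n ∈ Finset.Icc 1 p, χ (n : ℤ) = 0)
    (L : ℂ → ℂ) (hL : Differentiable ℂ L)
    (hLseries : ∀ s : ℂ, 1 < s.re →
      HasSum (fun n : ℕ => χ ((n : ℤ) + 1) / ((n : ℂ) + 1) ^ s) (L s))
    (N : ℕ) :
    (fun t : ℝ =>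
        (∑' n : ℕ, ((n : ℂ) + 1) * χ ((n : ℤ) + 1) *
            Complex.exp (-(((n : ℂ) + 1) ^ 2) * (t : ℂ)))
          - ∑ k ∈ Finset.range N, L (-2 * (k : ℂ) - 1) * (-(t : ℂ)) ^ k / (k.factorial : ℂ))
      =O[𝓝[>] (0 : ℝ)] fun t : ℝ => t ^ N := by
  simpa [dampedSeries, dampedCpow, mul_comm, mul_left_comm, mul_assoc, sub_eq_add_neg, add_comm]
    using stmt_5_general (.of_int hp hper hmean) hL hLseries 1 two_ne_zero N
end
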